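/- arXiv:1107.3002 — 3 statements merged into one kernel-verified Lean document; each statement's English description precedes it below -/
import Mathlib

section
/- Let K be a field, π a group, and φ: π → ℤ a group homomorphism which is nontrivial and whose kernel is a nontrivial subgroup. Let d ≥ 1 and let α: π → GL(d,K) be an irreducible representation whose restriction to ker φ is nontrivial (i.e. there exists γ ∈ ker φ with α(γ) ≠ id). Then the R-submodule of R^d generated by the set {(α⊗φ)(g)·v − v : g ∈ π, v ∈ R^d} is all of R^d, where R = K[t,t⁻¹]; equivalently, the zeroth twisted homology H₀ of π with coefficients in R^d via α⊗φ vanishes. -/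
open Matrix

/-!
Let `N ⊆ R^d` be the submodule generated by the elements `(α ⊗ φ)(g) · v - v`. The vectors of
`K^d` whose image in `R^d` lies in `N` form a `K`-subspace `W`, and `W` is `π`-invariant because
every `t ^ φ(g)` is a unit. For `γ ∈ ker φ` the twist is trivial, so `W` contains all
`α(γ) · v - v`; as `α(γ) ≠ 1`, irreducibility forces `W = K^d`, and `K^d` spans `R^d`.
-/

section

variable {K R n : Type*} [CommSemiring K] [Semiring R] [Algebra K R]

variable (K) in
/-- The contraction of `N ⊆ Rⁿ` along `Kⁿ → Rⁿ`: the vectors with entries in `K` whose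
entrywise image under `algebraMap K R` lies in `N`. -/
def scalarVectors (N : Submodule R (n → R)) : Submodule K (n → K) :=
  (N.restrictScalars K).comap ((Algebra.linearMap K R).compLeft n)

lemma mem_scalarVectors {N : Submodule R (n → R)} {v : n → K} :
    v ∈ scalarVectors K N ↔ algebraMap K R ∘ v ∈ N :=
  Iff.rfl

lemma eq_top_of_scalarVectors_eq_top [Finite n] {N : Submodule R (n → R)}
    (hN : scalarVectors K N = ⊤) : N = ⊤ := by
  classical
  rw [eq_top_iff, ← (Pi.basisFun R n).span_eq, Submodule.span_le]
  rintro _ ⟨i, rfl⟩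
  have hbasis : algebraMap K R ∘ Pi.single i 1 = Pi.basisFun R n i := by
    rw [Pi.basisFun_apply, ← map_one (algebraMap K R)]
    exact funext (Pi.apply_single (fun _ ↦ algebraMap K R) (fun _ ↦ map_zero _) i 1)
  exact hbasis ▸ mem_scalarVectors.mp (hN ▸ Submodule.mem_top)

end

section

variable {K R ι n : Type*} [CommSemiring K] [Ring R] [Algebra K R] [Fintype n]

/-- The submodule of `Rⁿ` generated by the elements `χ(i) A(i) v - v`. When `R` is commutative,
`A` is a representation of a group and `χ` a character of it with values in `Rˣ`, the quotient of
`Rⁿ` by this submodule is the zeroth homology with coefficients in `A ⊗ χ`; both are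
encoded as plain families. -/
def twistedAugmentation (χ : ι → R) (A : ι → Matrix n n K) : Submodule R (n → R) :=
  Submodule.span R
    {x | ∃ (i : ι) (v : n → R), x = (χ i • (A i).map (algebraMap K R)) *ᵥ v - v}

namespace twistedAugmentation

variable {χ : ι → R} {A : ι → Matrix n n K}

lemma smul_comp_mulVec_sub_mem (i : ι) (v : n → K) :
    χ i • (algebraMap K R ∘ (A i *ᵥ v)) - algebraMap K R ∘ v ∈ twistedAugmentation χ A := by
  have hmap : algebraMap K R ∘ (A i *ᵥ v) = (A i).map (algebraMap K R) *ᵥ (algebraMap K R ∘ v) :=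
    funext ((algebraMap K R).map_mulVec (A i) v)
  exact Submodule.subset_span ⟨i, algebraMap K R ∘ v, by rw [hmap, smul_mulVec]⟩

lemma mulVec_mem_scalarVectors {i : ι} (hi : IsUnit (χ i)) {v : n → K}
    (hv : v ∈ scalarVectors K (twistedAugmentation χ A)) :
    A i *ᵥ v ∈ scalarVectors K (twistedAugmentation χ A) := by
  have hsmul : χ i • (algebraMap K R ∘ (A i *ᵥ v)) ∈ twistedAugmentation χ A :=
    (Submodule.sub_mem_iff_left _ (mem_scalarVectors.mp hv)).mp (smul_comp_mulVec_sub_mem i v)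
  exact mem_scalarVectors.mpr ((Submodule.smul_mem_iff_of_isUnit _ hi).mp hsmul)

end twistedAugmentation

end

section

variable {K R ι n : Type*} [CommRing K] [Ring R] [Algebra K R] [Fintype n]
  {χ : ι → R} {A : ι → Matrix n n K}

namespace twistedAugmentation

lemma mulVec_sub_mem_scalarVectors {i : ι} (hi : χ i = 1) (v : n → K) :
    A i *ᵥ v - v ∈ scalarVectors K (twistedAugmentation χ A) := by
  have hsub : algebraMap K R ∘ (A i *ᵥ v - v) =
      χ i • (algebraMap K R ∘ (A i *ᵥ v)) - algebraMap K R ∘ v := by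
    rw [hi, one_smul]
    exact funext fun _ ↦ map_sub (algebraMap K R) _ _
  exact mem_scalarVectors.mpr (hsub ▸ smul_comp_mulVec_sub_mem i v)

lemma scalarVectors_ne_bot [DecidableEq n] {i : ι} (hχ : χ i = 1) (hA : A i ≠ 1) :
    scalarVectors K (twistedAugmentation χ A) ≠ ⊥ := by
  intro hbot
  refine hA (Matrix.ext_of_mulVec_single fun j ↦ ?_)
  have hfix : A i *ᵥ Pi.single j 1 - Pi.single j 1 = 0 :=
    (Submodule.mem_bot K).mp (hbot ▸ mulVec_sub_mem_scalarVectors hχ (Pi.single j 1))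
  rw [one_mulVec, sub_eq_zero.mp hfix]

end twistedAugmentation

theorem zeroth_twisted_homology_vanishes_general [DecidableEq n] (hχ : ∀ i, IsUnit (χ i))
    (hirr : ∀ W : Submodule K (n → K), (∀ i, ∀ v ∈ W, A i *ᵥ v ∈ W) → W = ⊥ ∨ W = ⊤)
    (hres : ∃ i, χ i = 1 ∧ A i ≠ 1) :
    twistedAugmentation χ A = ⊤ := by
  obtain ⟨i, hχi, hAi⟩ := hres
  have hinvariant : ∀ j, ∀ v ∈ scalarVectors K (twistedAugmentation χ A),
      A j *ᵥ v ∈ scalarVectors K (twistedAugmentation χ A) :=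
    fun j _ hv ↦ twistedAugmentation.mulVec_mem_scalarVectors (hχ j) hv
  exact eq_top_of_scalarVectors_eq_top <|
    (hirr _ hinvariant).resolve_left (twistedAugmentation.scalarVectors_ne_bot hχi hAi)

end

/-- **Vanishing of the zeroth twisted homology** (Proposition 7.3 of
Friedl–Kim–Kitayama, "Poincaré duality and degrees of twisted Alexander polynomials").

Let `K` be a field, `π` a group and `φ : π → ℤ` a nontrivial group homomorphism with
nontrivial kernel.  Let `α : π → GL(d,K)` (with `d ≥ 1`) be an irreducible representation
whose restriction to `ker φ` is nontrivial.  Then the `R`-submodule of `R^d`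
(`R = K[t,t⁻¹]`) generated by the elements `(α ⊗ φ)(g) · v - v` is all of `R^d`,
i.e. the zeroth twisted homology of `π` with coefficients in `R^d` via `α ⊗ φ` vanishes. -/
theorem zeroth_twisted_homology_vanishes
    {K : Type*} [Field K] {π : Type*} [Group π]
    (φ : π → ℤ) (hφ_hom : ∀ a b : π, φ (a * b) = φ a + φ b)
    (hφ_nontrivial : ∃ g : π, φ g ≠ 0)
    (hker_nontrivial : ∃ γ : π, φ γ = 0 ∧ γ ≠ 1)
    (d : ℕ) (hd : 1 ≤ d)
    (α : π →* GL (Fin d) K)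
    (hirr : ∀ W : Submodule K (Fin d → K),
      (∀ g : π, ∀ v ∈ W, (α g : Matrix (Fin d) (Fin d) K) *ᵥ v ∈ W) → W = ⊥ ∨ W = ⊤)
    (hres : ∃ γ : π, φ γ = 0 ∧ α γ ≠ 1) :
    Submodule.span (LaurentPolynomial K)
      {x : Fin d → LaurentPolynomial K | ∃ (g : π) (v : Fin d → LaurentPolynomial K),
        x = ((LaurentPolynomial.T (φ g) : LaurentPolynomial K) •
              ((α g : Matrix (Fin d) (Fin d) K).map
                (algebraMap K (LaurentPolynomial K)))) *ᵥ v - v} = ⊤ :=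
  let ⟨γ, hγ, hαγ⟩ := hres
  zeroth_twisted_homology_vanishes_general (fun g ↦ LaurentPolynomial.isUnit_T (φ g)) hirr
    ⟨γ, hγ ▸ LaurentPolynomial.T_zero, fun h ↦ hαγ (Units.ext h)⟩
end

section
/- Let K be a field, π a group, φ: π → ℤ a group homomorphism, d ≥ 1, and α: π → GL(d,K) a representation. Let R = K[t,t⁻¹] and let Γ = ker φ. If the R-submodule of R^d generated by {(α⊗φ)(g)·v − v : g ∈ π, v ∈ R^d} is a proper submodule of R^d, then the K-linear span of {α(γ)·w − w : γ ∈ Γ, w ∈ K^d} is a proper K-subspace of K^d (i.e. the coinvariants of the restriction of α to Γ are nonzero). -/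
open Matrix

/-!
On `Γ = ker φ` the twist `t ^ φ(γ)` is trivial, so base change to `R` carries `α(γ) · w - w` to
`(α ⊗ φ)(γ) · w - w`. A `K`-spanning set of `K^d` still spans `R^d` over `R`; hence if the vectors
`α(γ) · w - w` spanned `K^d`, their images would already generate `R^d`.
-/

theorem span_image_compLeft_eq_top {R S n : Type*} [Semiring R] [Semiring S] [Finite n]
    (f : R →+* S) {s : Set (n → R)} (hs : Submodule.span R s = ⊤) :
    Submodule.span S (f.compLeft n '' s) = ⊤ := by
  classical
  have compLeft_smul (r : R) (w : n → R) : f.compLeft n (r • w) = f r • f.compLeft n w := by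
    ext
    simp
  have compLeft_mem (w : n → R) : f.compLeft n w ∈ Submodule.span S (f.compLeft n '' s) := by
    have hw : w ∈ Submodule.span R s := hs ▸ Submodule.mem_top
    induction hw using Submodule.span_induction with
    | mem w hw => exact Submodule.subset_span (Set.mem_image_of_mem _ hw)
    | zero => exact map_zero (f.compLeft n) ▸ zero_mem _
    | add v w _ _ hv hw => exact map_add (f.compLeft n) v w ▸ add_mem hv hw
    | smul r w _ hw => exact compLeft_smul r w ▸ Submodule.smul_mem _ (f r) hw
  rw [eq_top_iff, ← (Pi.basisFun S n).span_eq, Submodule.span_le]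
  rintro _ ⟨i, rfl⟩
  have compLeft_single : f.compLeft n (Pi.single i 1) = Pi.basisFun S n i := by
    ext j
    simp [Pi.single_apply, apply_ite f]
  exact compLeft_single ▸ compLeft_mem _

theorem compLeft_mulVec {R S m n : Type*} [NonAssocSemiring R] [NonAssocSemiring S] [Fintype n]
    (f : R →+* S) (M : Matrix m n R) (w : n → R) :
    f.compLeft m (M *ᵥ w) = M.map f *ᵥ f.compLeft n w :=
  funext (f.map_mulVec M w)

theorem coinvariants_of_restriction_nonzero_general {R S ι n : Type*} [Ring R] [Ring S]
    [Fintype n] (f : R →+* S) (c : ι → S) (M : ι → Matrix n n R) {Γ : Set ι}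
    (hc : ∀ γ ∈ Γ, c γ = 1)
    (h : Submodule.span S {x : n → S | ∃ i v, x = (c i • (M i).map f) *ᵥ v - v} ≠ ⊤) :
    Submodule.span R {x : n → R | ∃ γ ∈ Γ, ∃ w, x = M γ *ᵥ w - w} ≠ ⊤ := by
  intro htop
  refine h (eq_top_mono (Submodule.span_mono ?_) (span_image_compLeft_eq_top f htop))
  rintro _ ⟨_, ⟨γ, hγ, w, rfl⟩, rfl⟩
  exact ⟨γ, f.compLeft n w, by rw [map_sub, compLeft_mulVec, hc γ hγ, one_smul]⟩

/-- If the `R = K[t,t⁻¹]`-submodule of `R^d` generated by the elements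
`(α ⊗ φ)(g) · v - v` (for `g ∈ π`, `v ∈ R^d`) is proper, then the `K`-span of
`α(γ) · w - w` (for `γ ∈ ker φ`, `w ∈ K^d`) is a proper subspace of `K^d`,
i.e. the coinvariants of the restriction of `α` to `Γ = ker φ` are nonzero. -/
theorem coinvariants_of_restriction_nonzero
    {K : Type*} [Field K] {π : Type*} [Group π]
    (φ : π → ℤ) (hφ_hom : ∀ a b : π, φ (a * b) = φ a + φ b)
    (d : ℕ) (hd : 1 ≤ d)
    (α : π →* GL (Fin d) K)
    (h : Submodule.span (LaurentPolynomial K)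
      {x : Fin d → LaurentPolynomial K | ∃ (g : π) (v : Fin d → LaurentPolynomial K),
        x = ((LaurentPolynomial.T (φ g) : LaurentPolynomial K) •
              ((α g : Matrix (Fin d) (Fin d) K).map
                (algebraMap K (LaurentPolynomial K)))) *ᵥ v - v} ≠ ⊤) :
    Submodule.span K
      {x : Fin d → K | ∃ γ : π, φ γ = 0 ∧ ∃ w : Fin d → K,
        x = (α γ : Matrix (Fin d) (Fin d) K) *ᵥ w - w} ≠ ⊤ :=
  coinvariants_of_restriction_nonzero_general (algebraMap K (LaurentPolynomial K))
    (fun g ↦ LaurentPolynomial.T (φ g)) (fun g ↦ (α g : Matrix (Fin d) (Fin d) K))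
    (Γ := {γ | φ γ = 0}) (fun γ (hγ : φ γ = 0) ↦ by rw [hγ, LaurentPolynomial.T_zero]) h
end

section
/- Let K be a field, V a finite-dimensional K-vector space, G a group, ρ: G → GL(V) a representation, B: V × V → K a nondegenerate bilinear form, and ρ† the B-dual representation of ρ. Let C be a finitely generated free left module over the group ring ℤ[G]. Regard the abelian group C ⊗_ℤ V as a K-vector space via the right factor, equipped with the diagonal G-action g·(c ⊗ v) = (g·c) ⊗ ρ(g)v, and let (C ⊗_ℤ V)_G denote its coinvariants, i.e. the quotient by the K-span of {g·x − x : g ∈ G, x ∈ C ⊗_ℤ V}. Let H denote the K-vector space of additive maps f: C → V satisfying f(g·c) = ρ†(g)(f(c)) for all g ∈ G, c ∈ C. Then the assignment sending f ∈ H to the functional on (C ⊗_ℤ V)_G induced by c ⊗ v ↦ B(f(c), v) is a well-defined K-linear isomorphism from H onto Hom_K((C ⊗_ℤ V)_G, K). -/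
open TensorProduct

section

variable {K V C : Type*} [Field K] [AddCommGroup V] [Module K V] [AddCommGroup C]

/-- The `K`-scalar multiplication on the abelian group `C ⊗_ℤ V`, acting through the
right factor `V`. -/
noncomputable instance tensorRightSMul : SMul K (C ⊗[ℤ] V) :=
  ⟨fun k x => (TensorProduct.comm ℤ C V).symm (k • (TensorProduct.comm ℤ C V) x)⟩

theorem tensorRightSMul_def (k : K) (x : C ⊗[ℤ] V) :
    k • x = (TensorProduct.comm ℤ C V).symm (k • (TensorProduct.comm ℤ C V) x) := rfl

/-- The abelian group `C ⊗_ℤ V` regarded as a `K`-vector space via the right factor: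
`k • (c ⊗ v) = c ⊗ (k • v)`. -/
noncomputable instance tensorRightModule : Module K (C ⊗[ℤ] V) where
  one_smul x := by rw [tensorRightSMul_def]; simp
  mul_smul a b x := by
    rw [tensorRightSMul_def, tensorRightSMul_def, tensorRightSMul_def]
    simp [mul_smul]
  smul_zero a := by rw [tensorRightSMul_def]; simp
  smul_add a x y := by
    rw [tensorRightSMul_def, tensorRightSMul_def, tensorRightSMul_def]
    simp [smul_add]
  add_smul a b x := by
    rw [tensorRightSMul_def, tensorRightSMul_def, tensorRightSMul_def]
    simp [add_smul]
  zero_smul x := by rw [tensorRightSMul_def]; simp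

end

/-- The `K`-vector space of additive maps `f : C → V` satisfying
`f (g • c) = ρd g (f c)` for all `g : G`, `c : C`. -/
noncomputable def equivariantMaps {K V G : Type*} [Field K] [AddCommGroup V] [Module K V]
    [Group G] (ρd : G →* (V ≃ₗ[K] V))
    (C : Type*) [AddCommGroup C] [Module (MonoidAlgebra ℤ G) C] :
    Submodule K (C →+ V) where
  carrier := {f | ∀ (g : G) (c : C), f ((MonoidAlgebra.of ℤ G g) • c) = ρd g (f c)}
  add_mem' := by
    intro f₁ f₂ h₁ h₂ g c
    simp only [AddMonoidHom.add_apply, h₁ g c, h₂ g c, map_add]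
  zero_mem' := by
    intro g c
    simp
  smul_mem' := by
    intro k f hf g c
    simp only [AddMonoidHom.smul_apply, hf g c, map_smul]

/-- The diagonal `G`-action on `C ⊗_ℤ V`: `g • (c ⊗ v) = (g • c) ⊗ (ρ g v)`,
as a `ℤ`-linear endomorphism. -/
noncomputable def diagAction {K V G : Type*} [Field K] [AddCommGroup V] [Module K V]
    [Group G] (ρ : G →* (V ≃ₗ[K] V))
    (C : Type*) [AddCommGroup C] [Module (MonoidAlgebra ℤ G) C] (g : G) :
    C ⊗[ℤ] V →ₗ[ℤ] C ⊗[ℤ] V :=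
  TensorProduct.map
    (DistribMulAction.toAddMonoidHom C (MonoidAlgebra.of ℤ G g)).toIntLinearMap
    ((ρ g).toLinearMap.toAddMonoidHom.toIntLinearMap)

/-!
A pairing `B` that identifies `U` with `V*` turns additive maps `C → U` into additive maps
`C → V*`, which tensor-hom adjunction identifies with functionals on `C ⊗ V`.  Under the resulting
isomorphism `Hom(C, U) ≃ (C ⊗ V)*` the equivariant maps correspond exactly to the functionals
invariant under the diagonal action, that is, to the annihilator of the span of the elements
`g • x - x`, and this annihilator is the dual of the coinvariants.
-/

section TensorHom

variable {K U V W C : Type*} [Field K] [AddCommGroup U] [Module K U] [AddCommGroup V] [Module K V]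
  [AddCommGroup W] [Module K W] [AddCommGroup C]

theorem tensorRight_smul_tmul (k : K) (c : C) (v : V) :
    k • (c ⊗ₜ[ℤ] v) = c ⊗ₜ[ℤ] (k • v) := by
  rw [tensorRightSMul_def, TensorProduct.comm_tmul, TensorProduct.smul_tmul',
    TensorProduct.comm_symm_tmul]

theorem tensorRight_linearMap_ext {φ ψ : C ⊗[ℤ] V →ₗ[K] W}
    (h : ∀ (c : C) (v : V), φ (c ⊗ₜ[ℤ] v) = ψ (c ⊗ₜ[ℤ] v)) : φ = ψ := by
  ext x
  induction x with
  | zero => rw [map_zero, map_zero]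
  | add x y hx hy => rw [map_add, map_add, hx, hy]
  | tmul c v => exact h c v

/-- The `K`-linear map `c ⊗ v ↦ f c v` on `C ⊗_ℤ V` induced by an additive family `f` of
`K`-linear maps `V → W`. -/
noncomputable def tensorRightLift (f : C →+ V →ₗ[K] W) : C ⊗[ℤ] V →ₗ[K] W where
  __ := TensorProduct.liftAddHom (LinearMap.toAddMonoidHom'.comp f) fun n c v => by simp
  map_smul' k x := by
    induction x with
    | zero => simp
    | add x y hx hy => simp_all [smul_add]
    | tmul c v => rw [tensorRight_smul_tmul]; exact map_smul (f c) k v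

/-- The additive family `c ↦ (v ↦ φ (c ⊗ v))` of `K`-linear maps `V → W` obtained by currying a
`K`-linear map `φ` on `C ⊗_ℤ V`. -/
noncomputable def tensorRightCurry (φ : C ⊗[ℤ] V →ₗ[K] W) : C →+ V →ₗ[K] W where
  toFun c :=
    { toFun := fun v => φ (c ⊗ₜ[ℤ] v)
      map_add' := fun v w => by rw [TensorProduct.tmul_add, map_add]
      map_smul' := fun k v => by rw [← tensorRight_smul_tmul, map_smul, RingHom.id_apply] }
  map_zero' := by ext v; simp
  map_add' c d := by ext v; simp [TensorProduct.add_tmul]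

/-- Tensor-hom adjunction for `C ⊗_ℤ V` with `K` acting through the right factor. -/
noncomputable def tensorRightLiftEquiv : (C →+ V →ₗ[K] W) ≃ₗ[K] (C ⊗[ℤ] V →ₗ[K] W) where
  toFun := tensorRightLift
  invFun := tensorRightCurry
  map_add' _ _ := tensorRight_linearMap_ext fun _ _ => rfl
  map_smul' _ _ := tensorRight_linearMap_ext fun _ _ => rfl
  left_inv _ := rfl
  right_inv _ := tensorRight_linearMap_ext fun _ _ => rfl

/-- The isomorphism `Hom(C, U) ≃ Hom_K(C ⊗_ℤ V, W)` sending `f` to `c ⊗ v ↦ e (f c) v`, for a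
pairing of `U` with `V` given as an isomorphism `e : U ≃ Hom_K(V, W)`. -/
noncomputable def tensorPairingEquiv (e : U ≃ₗ[K] (V →ₗ[K] W)) :
    (C →+ U) ≃ₗ[K] (C ⊗[ℤ] V →ₗ[K] W) :=
  { e.toAddEquiv.addMonoidHomCongrRight with
    map_smul' := fun k f => AddMonoidHom.ext fun c => map_smul e k (f c) } ≪≫ₗ
  tensorRightLiftEquiv

theorem tensorPairingEquiv_tmul (e : U ≃ₗ[K] (V →ₗ[K] W)) (f : C →+ U) (c : C) (v : V) :
    tensorPairingEquiv e f (c ⊗ₜ[ℤ] v) = e (f c) v := rfl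

end TensorHom

section Coinvariants

variable {K U V W G C : Type*} [Field K] [AddCommGroup U] [Module K U] [AddCommGroup V]
  [Module K V] [AddCommGroup W] [Module K W] [Group G] [AddCommGroup C]
  [Module (MonoidAlgebra ℤ G) C]

theorem diagAction_tmul (ρ : G →* (V ≃ₗ[K] V)) (g : G) (c : C) (v : V) :
    diagAction ρ C g (c ⊗ₜ[ℤ] v) = (MonoidAlgebra.of ℤ G g • c) ⊗ₜ[ℤ] ρ g v := rfl

variable (C) in
/-- The `K`-span of the elements `g • x - x` in `C ⊗_ℤ V`; the quotient by it is the space of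
coinvariants `(C ⊗_ℤ V)_G`. -/
noncomputable def diagCoinvariantsKer (ρ : G →* (V ≃ₗ[K] V)) : Submodule K (C ⊗[ℤ] V) :=
  Submodule.span K {x : C ⊗[ℤ] V | ∃ (g : G) (y : C ⊗[ℤ] V), x = diagAction ρ C g y - y}

theorem diagCoinvariantsKer_le_ker_iff {ρ : G →* (V ≃ₗ[K] V)} {φ : C ⊗[ℤ] V →ₗ[K] W} :
    diagCoinvariantsKer C ρ ≤ LinearMap.ker φ ↔
      ∀ (g : G) (c : C) (v : V),
        φ ((MonoidAlgebra.of ℤ G g • c) ⊗ₜ[ℤ] ρ g v) = φ (c ⊗ₜ[ℤ] v) := by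
  refine Submodule.span_le.trans ⟨fun h g c v => ?_, ?_⟩
  · rw [← diagAction_tmul, ← sub_eq_zero, ← map_sub]
    exact h ⟨g, c ⊗ₜ[ℤ] v, rfl⟩
  · rintro h _ ⟨g, y, rfl⟩
    rw [SetLike.mem_coe, LinearMap.mem_ker, map_sub, sub_eq_zero]
    induction y with
    | zero => simp only [map_zero]
    | add y z hy hz => simp only [map_add, hy, hz]
    | tmul c v => rw [diagAction_tmul, h]

theorem mem_equivariantMaps_iff_pairing_invariant {ρ : G →* (V ≃ₗ[K] V)} {ρd : G →* (U ≃ₗ[K] U)}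
    {B : U →ₗ[K] V →ₗ[K] W} (hB : Function.Injective B)
    (hdual : ∀ (g : G) (u : U) (v : V), B (ρd g u) (ρ g v) = B u v) {f : C →+ U} :
    f ∈ equivariantMaps ρd C ↔
      ∀ (g : G) (c : C) (v : V), B (f (MonoidAlgebra.of ℤ G g • c)) (ρ g v) = B (f c) v := by
  refine forall₂_congr fun g c => ?_
  rw [← hB.eq_iff, LinearMap.ext_iff, (ρ g).surjective.forall]
  simp only [hdual]

theorem equivariantMaps_map_tensorPairingEquiv {ρ : G →* (V ≃ₗ[K] V)} {ρd : G →* (U ≃ₗ[K] U)}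
    (e : U ≃ₗ[K] Module.Dual K V)
    (hdual : ∀ (g : G) (u : U) (v : V), e (ρd g u) (ρ g v) = e u v) :
    (equivariantMaps ρd C).map (tensorPairingEquiv (C := C) e).toLinearMap =
      (diagCoinvariantsKer C ρ).dualAnnihilator := by
  ext φ
  obtain ⟨f, rfl⟩ := (tensorPairingEquiv e).surjective φ
  calc tensorPairingEquiv e f ∈ (equivariantMaps ρd C).map (tensorPairingEquiv e).toLinearMap
    _ ↔ f ∈ equivariantMaps ρd C := by
      rw [Submodule.mem_map_equiv, LinearEquiv.symm_apply_apply]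
    _ ↔ ∀ (g : G) (c : C) (v : V), e (f (MonoidAlgebra.of ℤ G g • c)) (ρ g v) = e (f c) v :=
      mem_equivariantMaps_iff_pairing_invariant (B := e.toLinearMap) e.injective hdual
    _ ↔ diagCoinvariantsKer C ρ ≤ LinearMap.ker (tensorPairingEquiv e f) := by
      simp only [diagCoinvariantsKer_le_ker_iff, tensorPairingEquiv_tmul]
    _ ↔ tensorPairingEquiv e f ∈ (diagCoinvariantsKer C ρ).dualAnnihilator :=
      (Submodule.mem_dualAnnihilator _).symm

end Coinvariants

theorem equivariantMaps_equiv_dual_coinvariants_general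
    {K U V G : Type*} [Field K] [AddCommGroup U] [Module K U] [AddCommGroup V] [Module K V]
    [Group G] (ρ : G →* (V ≃ₗ[K] V)) (ρd : G →* (U ≃ₗ[K] U)) (B : U →ₗ[K] Module.Dual K V)
    (hB : Function.Bijective B)
    (hdual : ∀ (g : G) (u : U) (v : V), B (ρd g u) (ρ g v) = B u v)
    (C : Type*) [AddCommGroup C] [Module (MonoidAlgebra ℤ G) C] :
    ∃ e : equivariantMaps ρd C ≃ₗ[K] Module.Dual K ((C ⊗[ℤ] V) ⧸ diagCoinvariantsKer C ρ),
      ∀ (f : equivariantMaps ρd C) (c : C) (v : V),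
        e f (Submodule.Quotient.mk (c ⊗ₜ[ℤ] v)) = B (f.val c) v :=
  let pairing := tensorPairingEquiv (C := C) (LinearEquiv.ofBijective B hB)
  ⟨pairing.ofSubmodules _ _ (equivariantMaps_map_tensorPairingEquiv _ hdual) ≪≫ₗ
      (diagCoinvariantsKer C ρ).dualQuotEquivDualAnnihilator.symm,
    fun _ _ _ => rfl⟩

/-- Let `B` be a nondegenerate bilinear form on a finite-dimensional `K`-vector space `V`,
`ρ : G → GL(V)` a representation and `ρ†` its `B`-dual representation.  Let `C` be a
finitely generated free left `ℤ[G]`-module.  Then the map sending an equivariant additive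
map `f : C → V` (i.e. `f(g·c) = ρ†(g)(f(c))`) to the functional induced by
`c ⊗ v ↦ B(f(c), v)` is a well-defined `K`-linear isomorphism onto the dual of the
coinvariants `(C ⊗_ℤ V)_G`. -/
theorem equivariantMaps_equiv_dual_coinvariants
    {K V G : Type*} [Field K] [AddCommGroup V] [Module K V] [FiniteDimensional K V]
    [Group G] (ρ ρd : G →* (V ≃ₗ[K] V)) (B : LinearMap.BilinForm K V)
    (hB : B.Nondegenerate)
    (hdual : ∀ (g : G) (v w : V), B (ρd g v) (ρ g w) = B v w)
    (C : Type*) [AddCommGroup C] [Module (MonoidAlgebra ℤ G) C]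
    [Module.Finite (MonoidAlgebra ℤ G) C] [Module.Free (MonoidAlgebra ℤ G) C] :
    ∃ e : equivariantMaps ρd C ≃ₗ[K]
        Module.Dual K ((C ⊗[ℤ] V) ⧸ Submodule.span K
          {x : C ⊗[ℤ] V | ∃ (g : G) (y : C ⊗[ℤ] V), x = diagAction ρ C g y - y}),
      ∀ (f : equivariantMaps ρd C) (c : C) (v : V),
        e f (Submodule.Quotient.mk (c ⊗ₜ[ℤ] v)) = B (f.val c) v :=
  equivariantMaps_equiv_dual_coinvariants_general ρ ρd B (B.toDual hB).bijective hdual C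
end
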